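/- Let h : ℝ^n → ℝ be lower semicontinuous and κ-quasar-convex with respect to a minimizer x̄ ∈ argmin_{ℝ^n} h, with κ ∈ (0,1]. Let {β_k} be a sequence with β_k ≥ β' > 0 for all k, and let {x^k} satisfy x^{k+1} ∈ Prox_{β_k h}(x^k) for all k ≥ 0. Then for every N ≥ 1, h(x^N) − h(x̄) ≤ ‖x^0 − x̄‖² / (2κβ'N). -/

import Mathlib

open Set

/-- `h` is κ-quasar-convex (on all of the space) with respect to `x̄`. -/
def QuasarConvex {n : ℕ} (h : EuclideanSpace ℝ (Fin n) → ℝ) (κ : ℝ)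
    (xbar : EuclideanSpace ℝ (Fin n)) : Prop :=
  ∀ x : EuclideanSpace ℝ (Fin n), ∀ l ∈ Icc (0:ℝ) 1,
    h (l • xbar + (1 - l) • x) ≤ κ * l * h xbar + (1 - κ * l) * h x

/-- The proximity operator `Prox_{βh}(z)` of `h` on all of the space with parameter `β`. -/
def Prox {n : ℕ} (β : ℝ) (h : EuclideanSpace ℝ (Fin n) → ℝ)
    (z : EuclideanSpace ℝ (Fin n)) : Set (EuclideanSpace ℝ (Fin n)) :=
  {x | ∀ y, h x + 1 / (2 * β) * ‖z - x‖ ^ 2 ≤ h y + 1 / (2 * β) * ‖z - y‖ ^ 2}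

/-!
Since `p ∈ Prox_{βh}(z)` minimizes `h + ‖z - ·‖² / (2β)`, moving from `p` towards `x̄` does not
decrease that function. Bounding `h` along the segment by quasar-convexity, dividing by the step
length and letting it tend to `0` gives `βκ (h p - h x̄) ≤ ⟪z - p, p - x̄⟫`. By the three-point
identity, `2βκ (h p - h x̄) ≤ ‖z - x̄‖² - ‖p - x̄‖²`. These estimates telescope along the iteration,
and since the values `h (x k)` decrease, the last one can replace all the earlier ones in the sum.
-/

open Filter Topology Finset
open scoped RealInnerProductSpace

section Definitions

variable {E : Type*}

/-- `κ`-quasar-convexity of `h` with respect to `x̄` on a real vector space; `QuasarConvex` is the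
Euclidean case. As there, minimality of `x̄` is not part of the notion: for `κ = 1`, a convex
function satisfies it at every point. -/
def QuasarConvexAt [AddCommGroup E] [Module ℝ E] (h : E → ℝ) (κ : ℝ) (xbar : E) : Prop :=
  ∀ x : E, ∀ l ∈ Icc (0 : ℝ) 1, h (l • xbar + (1 - l) • x) ≤ κ * l * h xbar + (1 - κ * l) * h x

/-- The proximity operator `Prox_{βh}(z)` on a real seminormed space, as the set of all minimizers;
`Prox` is the Euclidean case. -/
def proxSet [SeminormedAddCommGroup E] (β : ℝ) (h : E → ℝ) (z : E) : Set E :=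
  {x | ∀ y, h x + 1 / (2 * β) * ‖z - x‖ ^ 2 ≤ h y + 1 / (2 * β) * ‖z - y‖ ^ 2}

end Definitions

theorem QuasarConvexAt.apply_add_smul_sub_le {E : Type*} [AddCommGroup E] [Module ℝ E]
    {h : E → ℝ} {κ : ℝ} {xbar : E} (hq : QuasarConvexAt h κ xbar) (p : E) {l : ℝ}
    (hl : l ∈ Icc (0 : ℝ) 1) :
    h (p + l • (xbar - p)) ≤ h p - κ * l * (h p - h xbar) := by
  have hseg : p + l • (xbar - p) = l • xbar + (1 - l) • p := by module
  rw [hseg]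
  linarith [hq p l hl]

theorem proxSet.apply_le {E : Type*} [SeminormedAddCommGroup E] {h : E → ℝ} {β : ℝ} {z p : E}
    (hp : p ∈ proxSet β h z) (hβ : 0 ≤ β) : h p ≤ h z := by
  have hmin := hp z
  have hpen : 0 ≤ 1 / (2 * β) * ‖z - p‖ ^ 2 := by positivity
  simp only [sub_self, norm_zero] at hmin
  linarith

theorem nonpos_of_forall_le_mul {a b : ℝ} (hab : ∀ l ∈ Ioc (0 : ℝ) 1, a ≤ l * b) : a ≤ 0 := by
  have hlim : Tendsto (fun l : ℝ ↦ l * b) (𝓝[>] 0) (𝓝 0) := by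
    simpa only [zero_mul] using
      ((continuous_mul_const b).tendsto (0 : ℝ)).mono_left nhdsWithin_le_nhds
  exact ge_of_tendsto hlim (mem_of_superset (Ioc_mem_nhdsGT one_pos) hab)

section InnerProductSpace

variable {E : Type*} [SeminormedAddCommGroup E] [InnerProductSpace ℝ E] {h : E → ℝ} {κ : ℝ}
  {xbar : E}

theorem proxSet.two_mul_sub_apply_add_le {β : ℝ} (hβ : 0 < β) {z p : E}
    (hp : p ∈ proxSet β h z) (v : E) :
    2 * β * (h p - h (p + v)) ≤ ‖v‖ ^ 2 - 2 * ⟪z - p, v⟫ := by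
  have hmin : h p - h (p + v) ≤ (‖z - (p + v)‖ ^ 2 - ‖z - p‖ ^ 2) / (2 * β) := by
    linear_combination hp (p + v)
  rw [le_div_iff₀' (by positivity), ← sub_sub, norm_sub_sq_real] at hmin
  linarith

namespace QuasarConvexAt

theorem mul_sub_le_inner (hq : QuasarConvexAt h κ xbar) {β : ℝ} (hβ : 0 < β) {z p : E}
    (hp : p ∈ proxSet β h z) : β * κ * (h p - h xbar) ≤ ⟪z - p, p - xbar⟫ := by
  have hstep : ∀ l ∈ Ioc (0 : ℝ) 1,
      2 * β * κ * (h p - h xbar) + 2 * ⟪z - p, xbar - p⟫ ≤ l * ‖xbar - p‖ ^ 2 := by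
    intro l hl
    have hprox := proxSet.two_mul_sub_apply_add_le hβ hp (l • (xbar - p))
    rw [inner_smul_right, norm_smul, mul_pow, Real.norm_eq_abs, sq_abs] at hprox
    have hquasar := mul_le_mul_of_nonneg_left
      (hq.apply_add_smul_sub_le p (Ioc_subset_Icc_self hl)) (show 0 ≤ 2 * β by positivity)
    refine le_of_mul_le_mul_left ?_ hl.1
    linarith
  have hneg : ⟪z - p, xbar - p⟫ = -⟪z - p, p - xbar⟫ := by rw [← inner_neg_right, neg_sub]
  linarith [nonpos_of_forall_le_mul hstep]

theorem two_mul_sub_le_norm_sq_sub (hq : QuasarConvexAt h κ xbar) {β : ℝ} (hβ : 0 < β) {z p : E}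
    (hp : p ∈ proxSet β h z) :
    2 * β * κ * (h p - h xbar) ≤ ‖z - xbar‖ ^ 2 - ‖p - xbar‖ ^ 2 - ‖z - p‖ ^ 2 := by
  have hthree : ‖z - xbar‖ ^ 2 = ‖z - p‖ ^ 2 + 2 * ⟪z - p, p - xbar⟫ + ‖p - xbar‖ ^ 2 := by
    rw [← norm_add_sq_real, sub_add_sub_cancel]
  linarith [hq.mul_sub_le_inner hβ hp]

variable {β : ℕ → ℝ} {x : ℕ → E}

theorem two_mul_sum_mul_sub_le (hq : QuasarConvexAt h κ xbar) (hκ : 0 ≤ κ) (hβ : ∀ k, 0 < β k)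
    (hiter : ∀ k, x (k + 1) ∈ proxSet (β k) h (x k)) (N : ℕ) :
    2 * κ * (∑ k ∈ range N, β k) * (h (x N) - h xbar)
      ≤ ‖x 0 - xbar‖ ^ 2 - ‖x N - xbar‖ ^ 2 := by
  induction N with
  | zero => simp
  | succ N ih =>
    have hsum : 0 ≤ ∑ k ∈ range N, β k := sum_nonneg fun k _ ↦ (hβ k).le
    have hdecr : 2 * κ * (∑ k ∈ range N, β k) * (h (x (N + 1)) - h xbar)
        ≤ 2 * κ * (∑ k ∈ range N, β k) * (h (x N) - h xbar) := by
      gcongr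
      exact proxSet.apply_le (hiter N) (hβ N).le
    have hlast := hq.two_mul_sub_le_norm_sq_sub (hβ N) (hiter N)
    rw [sum_range_succ]
    linarith [sq_nonneg ‖x N - x (N + 1)‖]

theorem sub_le_norm_sq_div_sum (hq : QuasarConvexAt h κ xbar) (hκ : 0 < κ) (hβ : ∀ k, 0 < β k)
    (hiter : ∀ k, x (k + 1) ∈ proxSet (β k) h (x k)) {N : ℕ} (hN : 1 ≤ N) :
    h (x N) - h xbar ≤ ‖x 0 - xbar‖ ^ 2 / (2 * κ * ∑ k ∈ range N, β k) := by
  have hsum : 0 < ∑ k ∈ range N, β k :=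
    sum_pos (fun k _ ↦ hβ k) (nonempty_range_iff.2 (Nat.one_le_iff_ne_zero.1 hN))
  rw [le_div_iff₀' (by positivity)]
  linarith [hq.two_mul_sum_mul_sub_le hκ.le hβ hiter N, sq_nonneg ‖x N - xbar‖]

end QuasarConvexAt

theorem stmt_19_general (hκ : 0 < κ) (hq : QuasarConvexAt h κ xbar) {β : ℕ → ℝ} {β' : ℝ}
    (hβ' : 0 < β') (hβ : ∀ k, β' ≤ β k) {x : ℕ → E}
    (hiter : ∀ k, x (k + 1) ∈ proxSet (β k) h (x k)) (N : ℕ) (hN : 1 ≤ N) :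
    h (x N) - h xbar ≤ ‖x 0 - xbar‖ ^ 2 / (2 * κ * β' * N) := by
  have hsum : β' * N ≤ ∑ k ∈ range N, β k := by
    simpa [mul_comm] using card_nsmul_le_sum (range N) β β' fun k _ ↦ hβ k
  calc h (x N) - h xbar
      ≤ ‖x 0 - xbar‖ ^ 2 / (2 * κ * ∑ k ∈ range N, β k) :=
        hq.sub_le_norm_sq_div_sum hκ (fun k ↦ hβ'.trans_le (hβ k)) hiter hN
    _ ≤ ‖x 0 - xbar‖ ^ 2 / (2 * κ * (β' * N)) := by gcongr
    _ = ‖x 0 - xbar‖ ^ 2 / (2 * κ * β' * N) := by rw [mul_assoc (2 * κ)]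

end InnerProductSpace

theorem stmt_19 {n : ℕ} (h : EuclideanSpace ℝ (Fin n) → ℝ)
    (hlsc : LowerSemicontinuous h)
    (κ : ℝ) (hκ : κ ∈ Ioc (0:ℝ) 1)
    (xbar : EuclideanSpace ℝ (Fin n)) (hxbar : ∀ y, h xbar ≤ h y)
    (hq : QuasarConvex h κ xbar)
    (β : ℕ → ℝ) (β' : ℝ) (hβ' : 0 < β') (hβ : ∀ k, β' ≤ β k)
    (x : ℕ → EuclideanSpace ℝ (Fin n))
    (hiter : ∀ k : ℕ, x (k + 1) ∈ Prox (β k) h (x k)) :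
    ∀ N : ℕ, 1 ≤ N → h (x N) - h xbar ≤ ‖x 0 - xbar‖ ^ 2 / (2 * κ * β' * N) :=
  stmt_19_general hκ.1 hq hβ' hβ hiter
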